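/- Let (R, 𝔪) be a regular local ring and let x ∈ 𝔪 with x ∉ 𝔪². Let N be a finitely generated R-module, let N' be a finitely generated R/(x)-module, and suppose there is an injective R/(x)-linear map N/xN → N'. Then rank_R N ≤ rank_{R/(x)} N', where for a Noetherian local domain A and a finitely generated A-module M, rank_A M denotes the dimension of Frac(A) ⊗_A M as a vector space over the fraction field Frac(A). (Here R is a domain since it is regular local, and R/(x) is a domain since x ∈ 𝔪 ∖ 𝔪².) -/

import Mathlib

open scoped TensorProduct

/-- A Noetherian local ring is regular if its maximal ideal can be generated by
`dim R` many elements. -/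
def IsRegularLocal (R : Type*) [CommRing R] [IsLocalRing R] : Prop :=
  IsNoetherianRing R ∧ ∃ s : Finset R,
    Ideal.span (s : Set R) = IsLocalRing.maximalIdeal R ∧
    (s.card : WithBot (WithTop ℕ)) = ringKrullDim R

/-- For a domain `A`, the (generic) rank of a module `M`, namely the dimension of
`Frac(A) ⊗_A M` over the fraction field `Frac(A)`. -/
noncomputable def genericRank (A : Type*) [CommRing A]
    (M : Type*) [AddCommGroup M] [Module A M] : Cardinal :=
  Module.rank (FractionRing A) ((FractionRing A) ⊗[A] M)

open IsLocalRing in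
lemma aux_exchange {R : Type*} [CommRing R] [IsLocalRing R] (s : Finset R)
    (hs : Ideal.span (s : Set R) = maximalIdeal R) {x : R} (hx : x ∈ maximalIdeal R)
    (hx2 : x ∉ (maximalIdeal R) ^ 2) :
    ∃ t : Finset R, t.card + 1 = s.card ∧ Ideal.span (t : Set R) ≤ maximalIdeal R ∧
      maximalIdeal R ≤ Ideal.span (t : Set R) ⊔ Ideal.span {x} := by
  classical
  have hx' := hx
  rw [← hs] at hx'
  obtain ⟨c, hc⟩ := (Submodule.mem_span_finset' (R := R)).1 hx'
  have hc' : ∑ i : s, c i * (i : R) = x := by simpa using hc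
  have : ∃ i : s, IsUnit (c i) := by
    by_contra! h
    apply hx2
    rw [← hc', pow_two]
    refine Ideal.sum_mem _ fun i _ => Ideal.mul_mem_mul ?_ ?_
    · exact (mem_maximalIdeal _).2 (h i)
    · rw [← hs]; exact Ideal.subset_span i.2
  obtain ⟨i, hi⟩ := this
  refine ⟨s.erase i, Finset.card_erase_add_one i.2,
    hs ▸ Ideal.span_mono (by simp), ?_⟩
  rw [← hs, Ideal.span_le]
  have hx1 : x ∈ Ideal.span ((s.erase i : Finset R) : Set R) ⊔ Ideal.span {x} :=
    Ideal.mem_sup_right (Ideal.mem_span_singleton_self x)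
  have hj1 : ∀ j ∈ s, j ≠ i → j ∈ Ideal.span ((s.erase i : Finset R) : Set R) ⊔ Ideal.span {x} :=
    fun j hj hji => Ideal.mem_sup_left (Ideal.subset_span (by simp [hj, hji]))
  intro j hj
  by_cases hji : j = i
  · subst hji
    rw [SetLike.mem_coe, ← Ideal.unit_mul_mem_iff_mem _ hi]
    have : c i * (i : R) = x - ∑ k ∈ Finset.univ.erase i, c k * (k : R) := by
      rw [← hc', ← Finset.add_sum_erase _ _ (Finset.mem_univ i)]; ring
    rw [this]
    refine Ideal.sub_mem _ hx1 (Ideal.sum_mem _ fun k hk => Ideal.mul_mem_left _ _ ?_)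
    refine hj1 k k.2 fun h => ?_
    simp at hk
    exact hk (Subtype.ext h)
  · exact hj1 j hj hji

open IsLocalRing in
lemma aux_quot {R : Type*} [CommRing R] [IsLocalRing R] [IsNoetherianRing R] (n : ℕ) (s : Finset R)
    (hs : Ideal.span (s : Set R) = maximalIdeal R) {x : R} (hx : x ∈ maximalIdeal R)
    (hx2 : x ∉ (maximalIdeal R) ^ 2) (hn : s.card ≤ n + 1)
    (hd : ((n + 1 : ℕ) : WithBot ℕ∞) ≤ ringKrullDim R) [IsLocalRing (R ⧸ Ideal.span {x})] :
    ∃ t : Finset (R ⧸ Ideal.span {x}), Ideal.span (t : Set (R ⧸ Ideal.span {x})) = maximalIdeal _ ∧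
      t.card ≤ n ∧ (n : WithBot ℕ∞) ≤ ringKrullDim (R ⧸ Ideal.span {x}) := by
  classical
  obtain ⟨t, ht, hsub, hle⟩ := aux_exchange s hs hx hx2
  -- the maximal ideal of the quotient
  have hm : maximalIdeal (R ⧸ Ideal.span {x}) =
      (maximalIdeal R).map (Ideal.Quotient.mk (Ideal.span {x})) := by
    refine (IsLocalRing.eq_maximalIdeal ?_).symm
    refine (Ideal.map_eq_top_or_isMaximal_of_surjective _ Ideal.Quotient.mk_surjective
      (maximalIdeal.isMaximal R)).resolve_left fun h => ?_
    have h2 := congrArg (Ideal.comap (Ideal.Quotient.mk (Ideal.span {x}))) h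
    rw [Ideal.comap_map_of_surjective _ Ideal.Quotient.mk_surjective, Ideal.comap_top,
      ← RingHom.ker_eq_comap_bot, Ideal.mk_ker, sup_eq_left.2] at h2
    · exact (maximalIdeal.isMaximal R).ne_top h2
    · rw [Ideal.span_le]; simpa using hx
  obtain ⟨t', ht', htm⟩ : ∃ t' : Finset R, t'.card ≤ n ∧
      maximalIdeal R = Ideal.span (t' : Set R) ⊔ Ideal.span {x} := by
    refine ⟨t, by omega, le_antisymm hle (sup_le hsub ?_)⟩
    rw [Ideal.span_le]; simpa using hx
  refine ⟨t'.image (Ideal.Quotient.mk _), ?_, Finset.card_image_le.trans ht', ?_⟩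
  · rw [hm, htm, Ideal.map_sup, Finset.coe_image, ← Ideal.map_span]
    symm
    rw [sup_eq_left, Ideal.map_quotient_self]
    exact bot_le
  · have := ringKrullDim_le_ringKrullDim_quotient_add_encard ({x} : Set R) (by
      simpa [IsLocalRing.ringJacobson_eq_maximalIdeal] using hx)
    have h3 := hd.trans this
    rw [Set.encard_singleton] at h3
    clear this
    generalize ringKrullDim (R ⧸ Ideal.span {x}) = D at h3
    induction D with
    | bot =>
      rw [WithBot.bot_add, le_bot_iff] at h3
      exact absurd h3 (WithBot.natCast_ne_bot _)
    | coe D =>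
      induction D with
      | top => exact le_top
      | coe D => norm_cast at h3 ⊢; omega

open IsLocalRing in
lemma aux_domain (n : ℕ) : ∀ (R : Type u) [CommRing R] [IsLocalRing R] [IsNoetherianRing R]
    (s : Finset R), Ideal.span (s : Set R) = maximalIdeal R → s.card ≤ n →
    (n : WithBot ℕ∞) ≤ ringKrullDim R → IsDomain R := by
  induction n with
  | zero =>
    intro R _ _ _ s hs hc _
    have : s = ∅ := by simpa using hc
    subst this
    have hb : maximalIdeal R = ⊥ := by rw [← hs]; simp
    exact (IsLocalRing.isField_iff_maximalIdeal_eq.2 hb).isDomain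
  | succ n ih =>
    intro R _ _ _ s hs hc hd
    classical
    have hmin : ∀ p ∈ minimalPrimes R, ¬ maximalIdeal R ≤ p := by
      intro p hp h
      have hpp : p.IsPrime := hp.1.1
      have : p = maximalIdeal R := le_antisymm (le_maximalIdeal hpp.ne_top) h
      subst this
      have h0 := Ideal.height_eq_zero_iff.2 hp
      rw [← IsLocalRing.maximalIdeal_height_eq_ringKrullDim, h0] at hd
      norm_cast at hd
    have hjac : (maximalIdeal R) ≤ Ideal.jacobson ⊥ := by
      rw [IsLocalRing.jacobson_eq_maximalIdeal _ bot_ne_top]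
    obtain ⟨p0, hp0⟩ : Nonempty (minimalPrimes R) :=
      Ideal.nonempty_minimalPrimes (I := (⊥ : Ideal R)) bot_ne_top
    have hm2 : ¬ maximalIdeal R ≤ maximalIdeal R ^ 2 := by
      intro h
      have := Submodule.eq_bot_of_le_smul_of_le_jacobson_bot (maximalIdeal R) (maximalIdeal R)
        (IsNoetherian.noetherian _) (by rwa [smul_eq_mul, ← pow_two]) hjac
      exact hmin p0 hp0 (by rw [this]; exact bot_le)
    have hfin : (minimalPrimes R).Finite := minimalPrimes.finite_of_isNoetherianRing R
    obtain ⟨x, hx, hx2, hxp⟩ : ∃ x ∈ maximalIdeal R, x ∉ maximalIdeal R ^ 2 ∧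
        ∀ p ∈ minimalPrimes R, x ∉ p := by
      by_contra! hcon
      have := (Ideal.subset_union_prime (s := insert (maximalIdeal R ^ 2) hfin.toFinset)
        (f := id) (maximalIdeal R ^ 2) (maximalIdeal R ^ 2) (by
          intro i hi h1 _
          simp only [Finset.mem_insert, h1, Set.Finite.mem_toFinset, false_or] at hi
          exact hi.1.1) (I := maximalIdeal R)).1 (by
          intro y hy
          by_cases hy2 : y ∈ maximalIdeal R ^ 2
          · simp [hy2]
          · obtain ⟨p, hp, hyp⟩ := hcon y hy hy2
            simp only [Set.mem_iUnion]
            exact ⟨p, by simp [hp], hyp⟩)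
      obtain ⟨i, hi, hle⟩ := this
      simp only [Finset.mem_insert, Set.Finite.mem_toFinset] at hi
      rcases hi with rfl | hi
      · exact hm2 hle
      · exact hmin i hi hle
    have hne : Ideal.span {x} ≠ ⊤ := fun h => by
      rw [Ideal.span_singleton_eq_top] at h
      exact hx h
    have : Nontrivial (R ⧸ Ideal.span {x}) := Ideal.Quotient.nontrivial_iff.2 hne
    have : IsLocalRing (R ⧸ Ideal.span {x}) :=
      IsLocalRing.of_surjective' (Ideal.Quotient.mk _) Ideal.Quotient.mk_surjective
    obtain ⟨t, ht, htc, htd⟩ := aux_quot n s hs hx hx2 hc hd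
    have hdom := ih _ t ht htc htd
    have hpr : (Ideal.span {x}).IsPrime := (Ideal.Quotient.isDomain_iff_prime _).1 hdom
    obtain ⟨p, hp, hpx⟩ := Ideal.exists_minimalPrimes_le (I := ⊥) (J := Ideal.span {x}) bot_le
    have hpp : p.IsPrime := hp.1.1
    have hb : p = ⊥ := by
      refine Submodule.eq_bot_of_le_smul_of_le_jacobson_bot (maximalIdeal R) p
        (IsNoetherian.noetherian _) ?_ hjac
      intro y hy
      obtain ⟨a, rfl⟩ := Ideal.mem_span_singleton.1 (hpx hy)
      exact Ideal.mul_mem_mul hx ((hpp.mem_or_mem hy).resolve_left (hxp p hp))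
    subst hb
    exact IsDomain.of_bot_isPrime R

lemma aux_rank {R : Type u} [CommRing R] [IsDomain R] {x : R} [IsDomain (R ⧸ Ideal.span {x})]
    (N : Type v) [AddCommGroup N] [Module R N] [Module.Finite R N] :
    Module.rank R N ≤
      Module.rank (R ⧸ Ideal.span {x}) (N ⧸ (Ideal.span {x} • (⊤ : Submodule R N))) := by
  set I := Ideal.span {x} with hI
  let π : N →ₗ[R] (N ⧸ (I • (⊤ : Submodule R N))) := Submodule.mkQ _
  have hπ : Function.Surjective π := Submodule.mkQ_surjective _
  have : Module.Finite (R ⧸ I) (N ⧸ (I • (⊤ : Submodule R N))) :=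
    Module.Finite.of_restrictScalars_finite R _ _
  obtain ⟨s, hs, hli⟩ := exists_set_linearIndependent (R ⧸ I) (N ⧸ (I • (⊤ : Submodule R N)))
  have hadd := Submodule.rank_quotient_add_rank (Submodule.span (R ⧸ I) s)
  rw [rank_span_set hli, hs] at hadd
  have hlt := Module.rank_lt_aleph0 (R ⧸ I) (N ⧸ (I • (⊤ : Submodule R N)))
  have h0 : Module.rank (R ⧸ I) ((N ⧸ (I • (⊤ : Submodule R N))) ⧸ Submodule.span (R ⧸ I) s) = 0 := by
    refine (Cardinal.add_right_inj_of_lt_aleph0 hlt).1 ?_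
    rw [hadd, zero_add]
  rw [Module.rank_eq_zero_iff_isTorsion] at h0
  obtain ⟨b, hb, hb0⟩ := Submodule.annihilator_top_inter_nonZeroDivisors h0
  obtain ⟨a, rfl⟩ := Ideal.Quotient.mk_surjective b
  have ha : a ∉ I := fun h => nonZeroDivisors.ne_zero hb0 (Ideal.Quotient.eq_zero_iff_mem.2 h)
  let t : Set N := Function.surjInv hπ '' s
  have hts : π '' t = s := by
    rw [← Set.image_comp, (Function.rightInverse_surjInv hπ).comp_eq_id, Set.image_id]
  let L := Submodule.span R t
  have key : ∀ n : N, ∃ l ∈ L, a • n - l ∈ I • (⊤ : Submodule R N) := by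
    intro n
    have h1 := (Submodule.mem_annihilator.1 hb) (Submodule.Quotient.mk (π n)) trivial
    rw [← Submodule.Quotient.mk_smul, Submodule.Quotient.mk_eq_zero] at h1
    have h2 : π (a • n) ∈ Submodule.span R s := by
      rw [← Submodule.restrictScalars_span R (R ⧸ I) Ideal.Quotient.mk_surjective]
      exact h1
    rw [← hts, Submodule.span_image] at h2
    obtain ⟨l, hl, hle⟩ := h2
    refine ⟨l, hl, ?_⟩
    rw [← Submodule.Quotient.mk_eq_zero, Submodule.Quotient.mk_sub, sub_eq_zero]
    exact hle.symm
  have hrange : LinearMap.range (algebraMap R (Module.End R (N ⧸ L)) a) ≤ I • ⊤ := by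
    rintro _ ⟨q, rfl⟩
    obtain ⟨n, rfl⟩ := Submodule.mkQ_surjective L q
    obtain ⟨l, hl, hn⟩ := key n
    have h3 := Submodule.mem_map_of_mem (f := L.mkQ) hn
    rw [Submodule.map_smul''] at h3
    rw [map_sub, map_smul, (Submodule.Quotient.mk_eq_zero L).2 hl |> (show L.mkQ l = 0 from ·),
      sub_zero] at h3
    exact Submodule.smul_mono le_rfl le_top h3
  obtain ⟨p, hpm, -, hpc, hpa⟩ :=
    LinearMap.exists_monic_and_natDegree_eq_and_coeff_mem_pow_and_aeval_eq_zero _ _ I hrange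
  rw [Polynomial.aeval_algebraMap_apply] at hpa
  have hpr : I.IsPrime := (Ideal.Quotient.isDomain_iff_prime _).1 inferInstance
  have hne : Polynomial.eval a p ≠ 0 := by
    intro h
    have h4 : a ^ p.natDegree ∈ I := by
      rw [Polynomial.eval_eq_sum_range, Finset.sum_range_succ, hpm.coeff_natDegree, one_mul] at h
      rw [eq_neg_of_add_eq_zero_right h]
      refine I.neg_mem (I.sum_mem fun k hk => I.mul_mem_right _ ?_)
      have hk' := Finset.mem_range.1 hk
      exact Ideal.pow_le_self (by omega) (hpc k)
    exact ha (hpr.mem_of_pow_mem _ h4)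
  have hQ : Module.rank R (N ⧸ L) = 0 := by
    rw [rank_eq_zero_iff]
    intro q
    refine ⟨_, hne, ?_⟩
    have := LinearMap.congr_fun hpa q
    simpa using this
  have h5 := Submodule.rank_quotient_add_rank L
  rw [hQ, zero_add] at h5
  rw [← h5, ← hs]
  exact (rank_span_le t).trans Cardinal.mk_image_le

lemma aux_generic (A : Type u) [CommRing A] [IsDomain A] (M : Type v) [AddCommGroup M]
    [Module A M] : genericRank A M = Cardinal.lift.{u} (Module.rank A M) := by
  have := (TensorProduct.isBaseChange A M (FractionRing A)).lift_rank_eq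
  rw [← Cardinal.lift_inj.{_, v}, genericRank, this]
  simp

/-- Let `(R, 𝔪)` be a regular local ring, `x ∈ 𝔪 ∖ 𝔪²`, `N` a finitely generated
`R`-module, `N'` a finitely generated `R/(x)`-module, and suppose `N/xN` injects
`R/(x)`-linearly into `N'`.  Then `rank_R N ≤ rank_{R/(x)} N'`. -/
theorem rank_le_of_quotient_injects {R : Type u} [CommRing R] [IsLocalRing R]
    (hreg : IsRegularLocal R)
    {x : R} (hx : x ∈ IsLocalRing.maximalIdeal R)
    (hx2 : x ∉ (IsLocalRing.maximalIdeal R) ^ 2)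
    {N : Type v} [AddCommGroup N] [Module R N] [Module.Finite R N]
    {N' : Type w} [AddCommGroup N'] [Module (R ⧸ Ideal.span {x}) N']
    [Module.Finite (R ⧸ Ideal.span {x}) N']
    (f : (N ⧸ (Ideal.span {x} • (⊤ : Submodule R N))) →ₗ[R ⧸ Ideal.span {x}] N')
    (hf : Function.Injective f) :
    Cardinal.lift.{w} (genericRank R N) ≤ Cardinal.lift.{v} (genericRank (R ⧸ Ideal.span {x}) N') := by
  obtain ⟨hnoeth, s, hs, hcard⟩ := hreg
  have hdR : IsDomain R := aux_domain s.card R s hs le_rfl hcard.le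
  have hne : Ideal.span {x} ≠ ⊤ := fun h => by
    rw [Ideal.span_singleton_eq_top] at h
    exact hx h
  have : Nontrivial (R ⧸ Ideal.span {x}) := Ideal.Quotient.nontrivial_iff.2 hne
  have : IsLocalRing (R ⧸ Ideal.span {x}) :=
    IsLocalRing.of_surjective' (Ideal.Quotient.mk _) Ideal.Quotient.mk_surjective
  obtain ⟨n, hn⟩ : ∃ n, s.card = n + 1 := by
    obtain ⟨t, ht, -⟩ := aux_exchange s hs hx hx2
    exact ⟨_, ht.symm⟩
  have hdQ : IsDomain (R ⧸ Ideal.span {x}) := by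
    obtain ⟨t, ht, htc, htd⟩ := aux_quot n s hs hx hx2 hn.le (by rw [← hn]; exact hcard.le)
    exact aux_domain n _ t ht htc htd
  rw [aux_generic, aux_generic]
  have h1 := aux_rank (x := x) N
  have h2 := LinearMap.lift_rank_le_of_injective f hf
  have h3 := (Cardinal.lift_le.{w}.2 h1).trans h2
  have h4 := Cardinal.lift_le.{u}.2 h3
  simpa only [Cardinal.lift_lift, Cardinal.lift_umax] using h4
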